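/- Let S be a positive face structure and a, b ∈ S_n with a <⁺ b. Then γ(a) ≤⁺ γ(b). -/

import Mathlib

/-- A pre-hypergraph: dimension-indexed finite sets of faces together with
codomain functions `gam k : S_{k+1} → S_k` and domain assignments
`del k : S_{k+1} → Finset S_k`. -/
structure PreHG where
  faces : ℕ → Finset ℕ
  gam : ℕ → ℕ → ℕ
  del : ℕ → ℕ → Finset ℕ

namespace PreHG

/-- δ extended to sets of faces. -/
def delS (S : PreHG) (k : ℕ) (A : Finset ℕ) : Finset ℕ := A.biUnion (S.del k)

/-- γ extended to sets of faces. -/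
def gamS (S : PreHG) (k : ℕ) (A : Finset ℕ) : Finset ℕ := A.image (S.gam k)

/-- The set `ι(a) = δδ(a) ∩ γδ(a)` of internal faces of a face `a` of dimension `k+2`
(the result lives in dimension `k`). -/
def iota (S : PreHG) (k : ℕ) (a : ℕ) : Finset ℕ :=
  S.delS k (S.del (k+1) a) ∩ S.gamS k (S.del (k+1) a)

/-- One step of the upper order: `a ⊲⁺ b` on faces of dimension `k`:
there is `α` of dimension `k+1` with `a ∈ δ(α)` and `γ(α) = b`. -/
def ltPlusOne (S : PreHG) (k : ℕ) (a b : ℕ) : Prop :=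
  ∃ α ∈ S.faces (k+1), a ∈ S.del k α ∧ S.gam k α = b

/-- The upper order `<⁺` on faces of dimension `k` (transitive closure of `⊲⁺`). -/
def ltPlus (S : PreHG) (k : ℕ) : ℕ → ℕ → Prop :=
  Relation.TransGen (S.ltPlusOne k)

/-- One step of the lower order: `a ⊲⁻ b` iff `γ(a) ∈ δ(b)`, on faces of dimension `k`
(the empty relation in dimension 0). -/
def ltMinusOne (S : PreHG) : ℕ → ℕ → ℕ → Prop
  | 0, _, _ => False
  | (k+1), a, b => a ∈ S.faces (k+1) ∧ b ∈ S.faces (k+1) ∧ S.gam k a ∈ S.del k b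

/-- The lower order `<⁻` on faces of dimension `k` (transitive closure of `⊲⁻`). -/
def ltMinus (S : PreHG) (k : ℕ) : ℕ → ℕ → Prop :=
  Relation.TransGen (S.ltMinusOne k)

/-- Comparability in the upper order. -/
def perpPlus (S : PreHG) (k : ℕ) (a b : ℕ) : Prop := S.ltPlus k a b ∨ S.ltPlus k b a

/-- Comparability in the lower order. -/
def perpMinus (S : PreHG) (k : ℕ) (a b : ℕ) : Prop := S.ltMinus k a b ∨ S.ltMinus k b a

/-- Iterated codomain `γ^{(l)}`: maps a face of dimension `l+m` down to dimension `l`. -/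
def gDown (S : PreHG) (l : ℕ) : ℕ → ℕ → ℕ
  | 0, a => a
  | (m+1), a => gDown S l m (S.gam (l+m) a)

/-- The axioms of a positive hypergraph. -/
def IsHG (S : PreHG) : Prop :=
  (∀ k a, a ∈ S.faces (k+1) → S.gam k a ∈ S.faces k) ∧
  (∀ k a, a ∈ S.faces (k+1) → S.del k a ⊆ S.faces k) ∧
  (∀ k a, a ∈ S.faces (k+1) → (S.del k a).Nonempty) ∧
  (∀ a ∈ S.faces 1, (S.del 0 a).card = 1) ∧
  (∃ N, ∀ k, N ≤ k → S.faces k = ∅)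

/-- Globularity: for faces of dimension ≥ 2,
`{γγ(a)} = γδ(a) − δδ(a)` and `δγ(a) = δδ(a) − γδ(a)`. -/
def Globular (S : PreHG) : Prop :=
  ∀ k a, a ∈ S.faces (k+2) →
    ({S.gam k (S.gam (k+1) a)} : Finset ℕ)
        = S.gamS k (S.del (k+1) a) \ S.delS k (S.del (k+1) a) ∧
      S.del k (S.gam (k+1) a)
        = S.delS k (S.del (k+1) a) \ S.gamS k (S.del (k+1) a)

/-- Strictness: `<⁺` is irreflexive in every dimension. -/
def StrictPlus (S : PreHG) : Prop := ∀ k, ∀ a ∈ S.faces k, ¬ S.ltPlus k a a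

/-- `<⁺` is linear in dimension 0. -/
def LinearZero (S : PreHG) : Prop :=
  ∀ a ∈ S.faces 0, ∀ b ∈ S.faces 0, a = b ∨ S.ltPlus 0 a b ∨ S.ltPlus 0 b a

/-- Disjointness: no two faces of positive dimension are comparable in both orders. -/
def Disjointness (S : PreHG) : Prop :=
  ∀ k a b, a ∈ S.faces (k+1) → b ∈ S.faces (k+1) →
    ¬ (S.perpPlus (k+1) a b ∧ S.perpMinus (k+1) a b)

/-- Pencil linearity: γ-fibers and δ-fibers are linearly ordered by `<⁺`. -/
def Pencil (S : PreHG) : Prop :=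
  ∀ k x,
    (∀ a b, a ∈ S.faces (k+1) → b ∈ S.faces (k+1) →
      S.gam k a = x → S.gam k b = x → a = b ∨ S.perpPlus (k+1) a b) ∧
    (∀ a b, a ∈ S.faces (k+1) → b ∈ S.faces (k+1) →
      x ∈ S.del k a → x ∈ S.del k b → a = b ∨ S.perpPlus (k+1) a b)

/-- A positive face structure: a nonempty positive hypergraph satisfying
globularity, strictness, disjointness and pencil linearity. -/
def IsPFS (S : PreHG) : Prop :=
  S.IsHG ∧ (S.faces 0).Nonempty ∧ S.Globular ∧ S.StrictPlus ∧ S.LinearZero ∧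
    S.Disjointness ∧ S.Pencil

end PreHG

/-! Let `α` be a face of dimension at least 2. By globularity, a face in `γδ(α)` other than `γγ(α)`
lies in `δ(c)` for some `c ∈ δ(α)`, so it has a `⊲⁺`-step to `γ(c)`, again in `γδ(α)`. Since `γδ(α)`
is finite and strictness rules out cycles, following such steps ends at `γγ(α)`. Hence
`γ(a) ≤⁺ γγ(α)` for all `a ∈ δ(α)`: a step `a ⊲⁺ γ(α)` is sent by `γ` to a path of steps. -/

theorem reflTransGen_of_finite_of_acyclic {β : Type*} {r : β → β → Prop} {A : Set β}
    (hA : A.Finite) (acyclic : ∀ x ∈ A, ¬ Relation.TransGen r x x) {m : β}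
    (exists_rel : ∀ x ∈ A, x ≠ m → ∃ y ∈ A, r x y) {x : β} (hx : x ∈ A) :
    Relation.ReflTransGen r x m := by
  let above : A → A → Prop := fun y x => Relation.TransGen r x y
  have above_wf : WellFounded above :=
    have : Finite A := hA
    have : IsTrans A above := ⟨fun _ _ _ hzy hyx => hyx.trans hzy⟩
    have : Std.Irrefl above := ⟨fun x => acyclic x x.2⟩
    Finite.wellFounded_of_trans_of_irrefl above
  suffices ∀ z : A, Relation.ReflTransGen r z m from this ⟨x, hx⟩
  intro z
  induction z using above_wf.induction with
  | _ z ih =>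
    rcases eq_or_ne (z : β) m with rfl | hzm
    · exact .refl
    · obtain ⟨y, hy, hzy⟩ := exists_rel z z.2 hzm
      exact .head hzy (ih ⟨y, hy⟩ (.single hzy))

namespace PreHG

/-- The reflexive upper order `≤⁺` on faces of dimension `k`, encoded as the reflexive transitive
closure of `⊲⁺` so that paths of steps compose without treating equality separately. -/
def lePlus (S : PreHG) (k : ℕ) : ℕ → ℕ → Prop :=
  Relation.ReflTransGen (S.ltPlusOne k)

variable {S : PreHG} {k : ℕ}

theorem lePlus_iff_eq_or_ltPlus {a b : ℕ} : S.lePlus k a b ↔ a = b ∨ S.ltPlus k a b :=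
  Relation.reflTransGen_iff_eq_or_transGen.trans (or_congr_left eq_comm)

theorem gamS_subset_faces (hHG : S.IsHG) {A : Finset ℕ} (hA : A ⊆ S.faces (k + 1)) :
    S.gamS k A ⊆ S.faces k :=
  Finset.image_subset_iff.2 fun c hc => hHG.1 k c (hA hc)

theorem exists_mem_gamS_ltPlusOne {A : Finset ℕ} (hA : A ⊆ S.faces (k + 1)) {x : ℕ}
    (hx : x ∈ S.delS k A) : ∃ y ∈ S.gamS k A, S.ltPlusOne k x y := by
  obtain ⟨c, hc, hxc⟩ := Finset.mem_biUnion.1 hx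
  exact ⟨S.gam k c, Finset.mem_image_of_mem _ hc, c, hA hc, hxc, rfl⟩

theorem Globular.mem_delS_of_ne_gam_gam (hG : S.Globular) {α : ℕ} (hα : α ∈ S.faces (k + 2))
    {x : ℕ} (hx : x ∈ S.gamS k (S.del (k + 1) α)) (hne : x ≠ S.gam k (S.gam (k + 1) α)) :
    x ∈ S.delS k (S.del (k + 1) α) := by
  by_contra hxd
  have hmem : x ∈ S.gamS k (S.del (k + 1) α) \ S.delS k (S.del (k + 1) α) :=
    Finset.mem_sdiff.2 ⟨hx, hxd⟩
  rw [← (hG k α hα).1] at hmem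
  exact hne (Finset.mem_singleton.1 hmem)

theorem lePlus_gam_gam_of_mem_gamS_del (hHG : S.IsHG) (hG : S.Globular) (hS : S.StrictPlus)
    {α : ℕ} (hα : α ∈ S.faces (k + 2)) {x : ℕ} (hx : x ∈ S.gamS k (S.del (k + 1) α)) :
    S.lePlus k x (S.gam k (S.gam (k + 1) α)) :=
  have hdel : S.del (k + 1) α ⊆ S.faces (k + 1) := hHG.2.1 (k + 1) α hα
  reflTransGen_of_finite_of_acyclic (Finset.finite_toSet (S.gamS k (S.del (k + 1) α)))
    (fun y hy => hS k y (gamS_subset_faces hHG hdel hy))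
    (fun _ hy hne => exists_mem_gamS_ltPlusOne hdel (hG.mem_delS_of_ne_gam_gam hα hy hne)) hx

theorem lePlus_gam_of_ltPlusOne (hHG : S.IsHG) (hG : S.Globular) (hS : S.StrictPlus) {a b : ℕ}
    (hab : S.ltPlusOne (k + 1) a b) : S.lePlus k (S.gam k a) (S.gam k b) := by
  obtain ⟨α, hα, ha, rfl⟩ := hab
  exact lePlus_gam_gam_of_mem_gamS_del hHG hG hS hα (Finset.mem_image_of_mem _ ha)

end PreHG

theorem stmt6_general {S : PreHG} (hHG : S.IsHG) (hG : S.Globular) (hS : S.StrictPlus)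
    {k a b : ℕ} (hab : S.ltPlus (k + 1) a b) :
    S.gam k a = S.gam k b ∨ S.ltPlus k (S.gam k a) (S.gam k b) := by
  have gam_mono : S.lePlus k (S.gam k a) (S.gam k b) :=
    hab.to_reflTransGen.lift' (S.gam k) fun _ _ => PreHG.lePlus_gam_of_ltPlusOne hHG hG hS
  exact PreHG.lePlus_iff_eq_or_ltPlus.1 gam_mono

/-- If `a <⁺ b` in `S_n` then `γ(a) ≤⁺ γ(b)`. -/
theorem stmt6 (S : PreHG) (hS : S.IsPFS) (k a b : ℕ)
    (ha : a ∈ S.faces (k+1)) (hb : b ∈ S.faces (k+1))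
    (hab : S.ltPlus (k+1) a b) :
    S.gam k a = S.gam k b ∨ S.ltPlus k (S.gam k a) (S.gam k b) := by
  obtain ⟨hHG, -, hG, hStrict, -⟩ := hS
  exact stmt6_general hHG hG hStrict hab
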